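/- Let m ≥ 3 be an integer and let θ ∈ (2π/m, 2π/(m−1)). Then the vectors x_1(θ), …, x_m(θ) are pairwise non-proportional and are precisely, up to positive scalar multiples, the extreme vectors of the cone K_θ they generate; K_θ ∈ P(m,3); the matrix A_θ is K_θ-nonnegative and K_θ-primitive; and γ(A_θ) = 2m − 1. -/

import Mathlib

open Matrix Set Real

noncomputable section

/-- A proper cone in `ℝ^n`: a closed convex cone that is pointed and full. -/
def IsProperCone {n : ℕ} (K : Set (Fin n → ℝ)) : Prop :=
  IsClosed K ∧ (∀ x ∈ K, ∀ y ∈ K, x + y ∈ K) ∧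
    (∀ (c : ℝ), 0 ≤ c → ∀ x ∈ K, c • x ∈ K) ∧
    K ∩ (-K) = {0} ∧ (interior K).Nonempty

/-- The positive hull (cone generated by) finitely many vectors. -/
def ConeGen {n m : ℕ} (y : Fin m → Fin n → ℝ) : Set (Fin n → ℝ) :=
  {x | ∃ c : Fin m → ℝ, (∀ j, 0 ≤ c j) ∧ x = ∑ j, c j • y j}

/-- A polyhedral cone: a proper cone that is the positive hull of finitely many vectors. -/
def IsPolyhedralCone {n : ℕ} (K : Set (Fin n → ℝ)) : Prop :=
  IsProperCone K ∧ ∃ (m : ℕ) (y : Fin m → Fin n → ℝ), K = ConeGen y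

/-- `A` is `K`-nonnegative: `A K ⊆ K`. -/
def KNonneg {n : ℕ} (K : Set (Fin n → ℝ)) (A : Matrix (Fin n) (Fin n) ℝ) : Prop :=
  ∀ x ∈ K, A.mulVec x ∈ K

/-- `A` is `K`-positive: `A` maps `K \ {0}` into the interior of `K`. -/
def KPositive {n : ℕ} (K : Set (Fin n → ℝ)) (A : Matrix (Fin n) (Fin n) ℝ) : Prop :=
  ∀ x ∈ K, x ≠ 0 → A.mulVec x ∈ interior K

/-- `A` is `K`-primitive: `A` is `K`-nonnegative and some power of `A` is `K`-positive. -/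
def KPrimitive {n : ℕ} (K : Set (Fin n → ℝ)) (A : Matrix (Fin n) (Fin n) ℝ) : Prop :=
  KNonneg K A ∧ ∃ k : ℕ, 0 < k ∧ KPositive K (A ^ k)

/-- The exponent `γ(A)` of a `K`-primitive matrix: the least `k ≥ 1` with `A^k` `K`-positive. -/
def expnt {n : ℕ} (K : Set (Fin n → ℝ)) (A : Matrix (Fin n) (Fin n) ℝ) : ℕ :=
  sInf {k : ℕ | 0 < k ∧ KPositive K (A ^ k)}

/-- `x` is an extreme vector of `K`. -/
def IsExtremeVec {n : ℕ} (K : Set (Fin n → ℝ)) (x : Fin n → ℝ) : Prop :=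
  x ∈ K ∧ x ≠ 0 ∧ ∀ y ∈ K, ∀ z ∈ K, x = y + z →
    (∃ a : ℝ, 0 ≤ a ∧ y = a • x) ∧ (∃ b : ℝ, 0 ≤ b ∧ z = b • x)

/-- The set of extreme rays of `K`. -/
def ExtremeRays {n : ℕ} (K : Set (Fin n → ℝ)) : Set (Set (Fin n → ℝ)) :=
  {R | ∃ x, IsExtremeVec K x ∧ R = {y | ∃ c : ℝ, 0 ≤ c ∧ y = c • x}}

/-- `K ∈ P(m,n)`: an `n`-dimensional polyhedral cone in `ℝ^n` with exactly `m` extreme rays.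
(A proper cone in `ℝ^n` has nonempty interior, hence is automatically `n`-dimensional.) -/
def MemP {n : ℕ} (m : ℕ) (K : Set (Fin n → ℝ)) : Prop :=
  IsPolyhedralCone K ∧ (ExtremeRays K).ncard = m

/-- A face of a cone `K`. -/
def IsFace {n : ℕ} (K F : Set (Fin n → ℝ)) : Prop :=
  0 ∈ F ∧ F ⊆ K ∧ (∀ x ∈ F, ∀ y ∈ F, x + y ∈ F) ∧
    (∀ (c : ℝ), 0 ≤ c → ∀ x ∈ F, c • x ∈ F) ∧
    ∀ x ∈ F, ∀ y ∈ K, x - y ∈ K → y ∈ F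

/-- `A` is `K`-irreducible: `A` is `K`-nonnegative and leaves invariant no nontrivial face. -/
def KIrreducible {n : ℕ} (K : Set (Fin n → ℝ)) (A : Matrix (Fin n) (Fin n) ℝ) : Prop :=
  KNonneg K A ∧ ∀ F : Set (Fin n → ℝ), IsFace K F → (∀ x ∈ F, A.mulVec x ∈ F) →
    F = ({0} : Set (Fin n → ℝ)) ∨ F = K

/-- The polynomial `g_θ(t) = (sin((m-1)θ)/sin θ)·t^m - (sin(mθ)/sin θ)·t^{m-1} + 1`. -/
def gpoly (m : ℕ) (θ t : ℝ) : ℝ :=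
  (Real.sin (((m : ℝ) - 1) * θ) / Real.sin θ) * t ^ m
    - (Real.sin ((m : ℝ) * θ) / Real.sin θ) * t ^ (m - 1) + 1

/-- The vector `x_{j+1}(θ) = (r^j cos(jθ), r^j sin(jθ), 1)ᵀ` (indexed from `j = 0`). -/
def xvec (r θ : ℝ) (j : ℕ) : Fin 3 → ℝ :=
  ![r ^ j * Real.cos ((j : ℝ) * θ), r ^ j * Real.sin ((j : ℝ) * θ), 1]

/-- The cone `K_θ` generated by `x_1(θ), …, x_m(θ)` (with `r` the positive root of `g_θ`). -/
def Ktheta (m : ℕ) (r θ : ℝ) : Set (Fin 3 → ℝ) :=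
  ConeGen (fun j : Fin m => xvec r θ j.val)

/-- The matrix `A_θ = r·[[cos θ, -sin θ],[sin θ, cos θ]] ⊕ [1]`. -/
def Atheta (r θ : ℝ) : Matrix (Fin 3) (Fin 3) ℝ :=
  !![r * Real.cos θ, -(r * Real.sin θ), 0;
     r * Real.sin θ,    r * Real.cos θ, 0;
     0, 0, 1]

/-!
The points `x_j = A_θ ^ j x_0` form an orbit of `A_θ`. The equation `g_θ(r) = 0` says exactly that
`x_m` lies in the plane of `x_0` and `x_1`, and the range of `θ` puts it strictly between them.

The points `x_0, …, x_{m-1}` form a strictly convex polygon. Up to positive factors, the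
determinants of the edge `x_0 x_1` with the other vertices are the partial sums of
`∑ q, r ^ q * sin (q * θ)`, which first increase and then decrease to `0` at `m`. Applying powers
of `A_θ` and the relation for `x_m` handles the vertices that come after an edge; those that come
before it are handled by reversing the order of the points, which replaces `r` by `r⁻¹`.

The vertices `x_0, …, x_{m-1}` lie on the boundary of the cone, and so do the points
`x_m, …, x_{2m-2}`, each of them strictly inside an edge, whereas
`x_{2m-1}` is a positive combination of `x_{m-1}`, `x_0` and `x_1`, hence interior. So
`A_θ ^ k x_0` is interior exactly when `2m - 1 ≤ k`.
-/

section PointedCone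

open Pointwise

variable {E : Type*} [AddCommGroup E] [Module ℝ E] [TopologicalSpace E] {C : PointedCone ℝ E}

theorem add_mem_interior_pointedCone [ContinuousAdd E] {x y : E} (hx : x ∈ interior (C : Set E))
    (hy : y ∈ C) : x + y ∈ interior (C : Set E) := by
  have hsub : (C : Set E) + C ⊆ C := Set.add_subset_iff.2 fun _ hu _ hv => C.add_mem hu hv
  exact interior_mono hsub (subset_interior_add_left (Set.add_mem_add hx hy))

theorem smul_mem_interior_pointedCone [ContinuousConstSMul ℝ E] {x : E} {c : ℝ} (hc : 0 < c)
    (hx : x ∈ interior (C : Set E)) : c • x ∈ interior (C : Set E) := by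
  have hsub : c • (C : Set E) ⊆ C := by
    rintro _ ⟨z, hz, rfl⟩
    exact C.smul_mem hc.le hz
  have hcx := Set.smul_mem_smul_set (a := c) hx
  rw [← interior_smul₀ hc.ne'] at hcx
  exact interior_mono hsub hcx

theorem sum_smul_mem_interior_pointedCone [IsTopologicalAddGroup E] [ContinuousSMul ℝ E]
    [T2Space E] [FiniteDimensional ℝ E] {ι : Type*} [Fintype ι] {w : ι → E} (hw : ∀ i, w i ∈ C)
    (hspan : Submodule.span ℝ (Set.range w) = ⊤) {c : ι → ℝ} (hc : ∀ i, 0 < c i) :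
    ∑ i, c i • w i ∈ interior (C : Set E) := by
  let Φ := Fintype.linearCombination ℝ w
  have hopen : IsOpenMap Φ :=
    Φ.isOpenMap_of_finiteDimensional <| by
      rw [← LinearMap.range_eq_top, Fintype.range_linearCombination, hspan]
  have horthant : IsOpen (Set.univ.pi fun _ : ι => Set.Ioi (0 : ℝ)) :=
    isOpen_set_pi Set.finite_univ fun _ _ => isOpen_Ioi
  refine interior_maximal ?_ (hopen _ horthant) ⟨c, fun i _ => hc i, rfl⟩
  rintro _ ⟨d, hd, rfl⟩
  exact C.sum_mem fun i _ => C.smul_mem (le_of_lt (hd i trivial)) (hw i)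

end PointedCone

section DualForms

variable {E : Type*} [AddCommGroup E] [Module ℝ E] [TopologicalSpace E]
  [IsTopologicalAddGroup E] [ContinuousSMul ℝ E]

theorem dual_pos_of_mem_interior {K : Set E} {f : Module.Dual ℝ E} (hf : ∀ z ∈ K, 0 ≤ f z)
    (hf0 : f ≠ 0) {x : E} (hx : x ∈ interior K) : 0 < f x := by
  have hopen : IsOpenMap f :=
    f.isOpenMap_of_finiteDimensional (LinearMap.surjective hf0)
  have hsub : f '' interior K ⊆ interior (Set.Ici 0) :=
    interior_maximal (Set.image_subset_iff.2 fun z hz => hf z (interior_subset hz))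
      (hopen _ isOpen_interior)
  rw [interior_Ici] at hsub
  exact hsub ⟨x, hx, rfl⟩

end DualForms

theorem KNonneg.mapsTo_interior {n : ℕ} {K : Set (Fin n → ℝ)} {A : Matrix (Fin n) (Fin n) ℝ}
    (hA : KNonneg K A) (hsurj : Function.Surjective A.mulVec) :
    Set.MapsTo A.mulVec (interior K) (interior K) := by
  have hopen : IsOpenMap A.mulVec := A.mulVecLin.isOpenMap_of_finiteDimensional hsurj
  exact Set.mapsTo_iff_image_subset.2 <|
    interior_maximal (Set.image_subset_iff.2 fun x hx => hA x (interior_subset hx))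
      (hopen _ isOpen_interior)

section ConeGen

variable {n m : ℕ} {y : Fin m → Fin n → ℝ} {x : Fin n → ℝ} {f : Module.Dual ℝ (Fin n → ℝ)}

theorem coneGen_eq_hull (y : Fin m → Fin n → ℝ) :
    ConeGen y = (PointedCone.hull ℝ (Set.range y) : Set (Fin n → ℝ)) := by
  ext x
  rw [SetLike.mem_coe, Submodule.mem_span_range_iff_exists_fun]
  constructor
  · rintro ⟨c, hc, rfl⟩
    exact ⟨fun j => ⟨c j, hc j⟩, rfl⟩
  · rintro ⟨c, rfl⟩
    exact ⟨fun j => c j, fun j => (c j).2, rfl⟩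

theorem self_mem_coneGen (y : Fin m → Fin n → ℝ) (j : Fin m) : y j ∈ ConeGen y := by
  rw [coneGen_eq_hull]
  exact PointedCone.subset_hull (Set.mem_range_self j)

theorem apply_mem_coneGen {y : ℕ → Fin n → ℝ} {j : ℕ} (hj : j < m) :
    y j ∈ ConeGen fun j : Fin m => y j :=
  self_mem_coneGen _ (⟨j, hj⟩ : Fin m)

theorem add_mem_coneGen {z : Fin n → ℝ} (hx : x ∈ ConeGen y) (hz : z ∈ ConeGen y) :
    x + z ∈ ConeGen y := by
  rw [coneGen_eq_hull] at *
  exact Submodule.add_mem _ hx hz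

theorem smul_mem_coneGen {c : ℝ} (hc : 0 ≤ c) (hx : x ∈ ConeGen y) : c • x ∈ ConeGen y := by
  rw [coneGen_eq_hull] at *
  exact Submodule.smul_mem _ (⟨c, hc⟩ : NNReal) hx

theorem sum_smul_mem_coneGen {ι : Type*} (s : Finset ι) {c : ι → ℝ} {w : ι → Fin n → ℝ}
    (hc : ∀ i, 0 ≤ c i) (hw : ∀ i, w i ∈ ConeGen y) : ∑ i ∈ s, c i • w i ∈ ConeGen y := by
  rw [coneGen_eq_hull] at *
  exact Submodule.sum_mem _ fun i _ => Submodule.smul_mem _ (⟨c i, hc i⟩ : NNReal) (hw i)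

theorem dual_nonneg_of_mem_coneGen (hf : ∀ j, 0 ≤ f (y j)) (hx : x ∈ ConeGen y) : 0 ≤ f x := by
  obtain ⟨c, hc, rfl⟩ := hx
  simp only [map_sum, map_smul, smul_eq_mul]
  exact Finset.sum_nonneg fun j _ => mul_nonneg (hc j) (hf j)

theorem eq_smul_of_dual_eq_zero {i : Fin m} (hfi : f (y i) = 0) (hf : ∀ k ≠ i, 0 < f (y k))
    (hx : x ∈ ConeGen y) (hfx : f x = 0) : ∃ a : ℝ, 0 ≤ a ∧ x = a • y i := by
  obtain ⟨c, hc, rfl⟩ := hx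
  have hnonneg : ∀ k, 0 ≤ f (y k) := fun k =>
    (eq_or_ne k i).elim (fun h => h ▸ hfi.ge) fun h => (hf k h).le
  simp only [map_sum, map_smul, smul_eq_mul] at hfx
  rw [Finset.sum_eq_zero_iff_of_nonneg fun k _ => mul_nonneg (hc k) (hnonneg k)] at hfx
  refine ⟨c i, hc i, Fintype.sum_eq_single i fun k hk => ?_⟩
  rw [(mul_eq_zero_iff_right (hf k hk).ne').1 (hfx k (Finset.mem_univ k)), zero_smul]

theorem coneGen_inter_neg (hf : ∀ j, 0 < f (y j)) : ConeGen y ∩ -ConeGen y = {0} := by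
  ext x
  constructor
  · rintro ⟨⟨c, hc, rfl⟩, hneg⟩
    have hle : f (∑ j, c j • y j) ≤ 0 := by
      simpa using dual_nonneg_of_mem_coneGen (fun j => (hf j).le) hneg
    simp only [map_sum, map_smul, smul_eq_mul] at hle
    have hterm : ∀ j, 0 ≤ c j * f (y j) := fun j => mul_nonneg (hc j) (hf j).le
    have hzero := (Finset.sum_eq_zero_iff_of_nonneg fun j _ => hterm j).1
      (hle.antisymm (Finset.sum_nonneg fun j _ => hterm j))
    refine Finset.sum_eq_zero fun j hj => ?_
    rw [(mul_eq_zero_iff_right (hf j).ne').1 (hzero j hj), zero_smul]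
  · rintro rfl
    have hzero : (0 : Fin n → ℝ) ∈ ConeGen y := ⟨0, by simp, by simp⟩
    exact ⟨hzero, by simpa using hzero⟩

-- Bounding `f` bounds every coefficient, so the cone is locally the image of a compact box.
theorem isClosed_coneGen (hf : ∀ j, 0 < f (y j)) : IsClosed (ConeGen y) := by
  refine isClosed_of_closure_subset fun x hx => ?_
  let U : Set (Fin n → ℝ) := {z | f z < f x + 1}
  let box : Set (Fin m → ℝ) := Set.Icc 0 fun j => (f x + 1) / f (y j)
  let Φ := Fintype.linearCombination ℝ y
  have hU : IsOpen U := isOpen_lt f.continuous_of_finiteDimensional continuous_const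
  have hcompact : IsCompact (Φ '' box) :=
    isCompact_Icc.image Φ.continuous_of_finiteDimensional
  have hsub : U ∩ ConeGen y ⊆ Φ '' box := by
    rintro _ ⟨hlt, c, hc, rfl⟩
    refine ⟨c, ⟨hc, fun j => ?_⟩, rfl⟩
    have hle : c j * f (y j) ≤ f (∑ i, c i • y i) := by
      simp only [map_sum, map_smul, smul_eq_mul]
      exact Finset.single_le_sum (fun i _ => mul_nonneg (hc i) (hf i).le) (Finset.mem_univ j)
    exact (le_div_iff₀ (hf j)).2 (hle.trans (le_of_lt hlt))
  have hxU : x ∈ U := lt_add_one (f x)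
  obtain ⟨c, hc, rfl⟩ :=
    closure_minimal hsub hcompact.isClosed (hU.inter_closure ⟨hxU, hx⟩)
  exact ⟨c, hc.1, rfl⟩

theorem exists_pos_smul_of_isExtremeVec (hx : IsExtremeVec (ConeGen y) x) :
    ∃ (j : Fin m) (c : ℝ), 0 < c ∧ x = c • y j := by
  obtain ⟨⟨c, hc, hsum⟩, hx0, hext⟩ := hx
  obtain ⟨j, -, hj⟩ := Finset.exists_ne_zero_of_sum_ne_zero (hsum ▸ hx0)
  have hcj : 0 < c j := (hc j).lt_of_ne' (left_ne_zero_of_smul hj)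
  have hsplit : x = c j • y j + ∑ k ∈ Finset.univ.erase j, c k • y k := by
    rw [hsum, Finset.add_sum_erase _ (fun k => c k • y k) (Finset.mem_univ j)]
  obtain ⟨⟨a, ha, hax⟩, -⟩ := hext _ (smul_mem_coneGen hcj.le (self_mem_coneGen y j)) _
    (sum_smul_mem_coneGen _ hc (self_mem_coneGen y)) hsplit
  have ha0 : a ≠ 0 := left_ne_zero_of_smul (hax ▸ hj)
  refine ⟨j, a⁻¹ * c j, by positivity, ?_⟩
  rw [mul_smul, hax, inv_smul_smul₀ ha0]

theorem isExtremeVec_of_dual {i : Fin m} (hi : y i ≠ 0) (hfi : f (y i) = 0)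
    (hf : ∀ k ≠ i, 0 < f (y k)) {c : ℝ} (hc : 0 < c) : IsExtremeVec (ConeGen y) (c • y i) := by
  have hnonneg : ∀ k, 0 ≤ f (y k) := fun k =>
    (eq_or_ne k i).elim (fun h => h ▸ hfi.ge) fun h => (hf k h).le
  have hmultiple : ∀ z ∈ ConeGen y, f z = 0 → ∃ a : ℝ, 0 ≤ a ∧ z = a • c • y i := by
    intro z hz hfz
    obtain ⟨a, ha, rfl⟩ := eq_smul_of_dual_eq_zero hfi hf hz hfz
    exact ⟨a / c, by positivity, by rw [smul_smul, div_mul_cancel₀ _ hc.ne']⟩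
  refine ⟨smul_mem_coneGen hc.le (self_mem_coneGen y i), smul_ne_zero hc.ne' hi, ?_⟩
  intro u hu v hv huv
  have hadd : f u + f v = 0 := by rw [← map_add, ← huv, map_smul, hfi, smul_zero]
  have hfu := dual_nonneg_of_mem_coneGen hnonneg hu
  have hfv := dual_nonneg_of_mem_coneGen hnonneg hv
  exact ⟨hmultiple u hu (by linarith), hmultiple v hv (by linarith)⟩

theorem kNonneg_coneGen_iff {A : Matrix (Fin n) (Fin n) ℝ} :
    KNonneg (ConeGen y) A ↔ ∀ j, A *ᵥ y j ∈ ConeGen y := by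
  refine ⟨fun hA j => hA _ (self_mem_coneGen y j), ?_⟩
  rintro hA _ ⟨c, hc, rfl⟩
  simp only [Matrix.mulVec_sum, Matrix.mulVec_smul]
  exact sum_smul_mem_coneGen _ hc hA

theorem kPositive_coneGen_iff (hy : ∀ j, y j ≠ 0) {A : Matrix (Fin n) (Fin n) ℝ} :
    KPositive (ConeGen y) A ↔ ∀ j, A *ᵥ y j ∈ interior (ConeGen y) := by
  refine ⟨fun hA j => hA _ (self_mem_coneGen y j) (hy j), ?_⟩
  rintro hA _ ⟨c, hc, rfl⟩ hne
  obtain ⟨j, -, hj⟩ := Finset.exists_ne_zero_of_sum_ne_zero hne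
  have hcj : 0 < c j := (hc j).lt_of_ne' (left_ne_zero_of_smul hj)
  have hrest : ∑ k ∈ Finset.univ.erase j, c k • A *ᵥ y k ∈ ConeGen y :=
    sum_smul_mem_coneGen _ hc fun k => interior_subset (hA k)
  simp only [Matrix.mulVec_sum, Matrix.mulVec_smul]
  rw [← Finset.add_sum_erase _ _ (Finset.mem_univ j)]
  rw [coneGen_eq_hull] at *
  exact add_mem_interior_pointedCone (smul_mem_interior_pointedCone hcj (hA j)) hrest

end ConeGen

/-- Every vector of the family is exposed: some linear form vanishes on it and is positive on all
the others. This certifies that the vectors span distinct extreme rays of the cone they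
generate. -/
def IsExposedFamily {n m : ℕ} (y : Fin m → Fin n → ℝ) : Prop :=
  ∀ i, ∃ f : Module.Dual ℝ (Fin n → ℝ), f (y i) = 0 ∧ ∀ k ≠ i, 0 < f (y k)

namespace IsExposedFamily

variable {n m : ℕ} {y : Fin m → Fin n → ℝ}

theorem ne_smul (hy : IsExposedFamily y) {i j : Fin m} (hij : i ≠ j) (c : ℝ) :
    y j ≠ c • y i := by
  intro h
  obtain ⟨f, hfi, hf⟩ := hy i
  refine (hf j hij.symm).ne' ?_
  rw [h, map_smul, hfi, smul_zero]

variable [Nontrivial (Fin m)]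

theorem ne_zero (hy : IsExposedFamily y) (j : Fin m) : y j ≠ 0 := by
  obtain ⟨i, hij⟩ := exists_ne j
  simpa using hy.ne_smul hij 0

theorem exists_dual_pos (hy : IsExposedFamily y) :
    ∃ f : Module.Dual ℝ (Fin n → ℝ), ∀ k, 0 < f (y k) := by
  obtain ⟨i, j, hij⟩ := exists_pair_ne (Fin m)
  obtain ⟨f, hfi, hf⟩ := hy i
  obtain ⟨g, hgj, hg⟩ := hy j
  refine ⟨f + g, fun k => ?_⟩
  rw [LinearMap.add_apply]
  rcases eq_or_ne k i with rfl | hki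
  · rw [hfi, zero_add]
    exact hg k hij
  · rcases eq_or_ne k j with rfl | hkj
    · rw [hgj, add_zero]
      exact hf k hki
    · exact add_pos (hf k hki) (hg k hkj)

theorem isProperCone (hy : IsExposedFamily y) (hspan : Submodule.span ℝ (Set.range y) = ⊤) :
    IsProperCone (ConeGen y) := by
  obtain ⟨f, hf⟩ := hy.exists_dual_pos
  refine ⟨isClosed_coneGen hf, fun _ hx _ hz => add_mem_coneGen hx hz,
    fun _ hc _ hx => smul_mem_coneGen hc hx, coneGen_inter_neg hf, ?_⟩
  rw [coneGen_eq_hull]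
  exact ⟨_, sum_smul_mem_interior_pointedCone
    (fun j => PointedCone.subset_hull (Set.mem_range_self j)) hspan fun _ => one_pos⟩

theorem isExtremeVec_iff (hy : IsExposedFamily y) {x : Fin n → ℝ} :
    IsExtremeVec (ConeGen y) x ↔ ∃ (j : Fin m) (c : ℝ), 0 < c ∧ x = c • y j := by
  refine ⟨exists_pos_smul_of_isExtremeVec, ?_⟩
  rintro ⟨j, c, hc, rfl⟩
  obtain ⟨f, hfj, hf⟩ := hy j
  exact isExtremeVec_of_dual (hy.ne_zero j) hfj hf hc

theorem extremeRays_eq (hy : IsExposedFamily y) :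
    ExtremeRays (ConeGen y) = Set.range fun j => {z | ∃ c : ℝ, 0 ≤ c ∧ z = c • y j} := by
  ext R
  constructor
  · rintro ⟨x, hx, rfl⟩
    obtain ⟨j, a, ha, rfl⟩ := hy.isExtremeVec_iff.1 hx
    refine ⟨j, Set.ext fun z => ⟨?_, ?_⟩⟩
    · rintro ⟨c, hc, rfl⟩
      exact ⟨c / a, by positivity, by rw [smul_smul, div_mul_cancel₀ _ ha.ne']⟩
    · rintro ⟨c, hc, rfl⟩
      exact ⟨c * a, by positivity, smul_smul c a _⟩
  · rintro ⟨j, rfl⟩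
    exact ⟨y j, hy.isExtremeVec_iff.2 ⟨j, 1, one_pos, (one_smul ℝ _).symm⟩, rfl⟩

theorem ncard_extremeRays (hy : IsExposedFamily y) : (ExtremeRays (ConeGen y)).ncard = m := by
  have hinj : Function.Injective fun j => {z | ∃ c : ℝ, 0 ≤ c ∧ z = c • y j} := by
    intro i j hij
    by_contra hne
    obtain ⟨c, -, hc⟩ := (Set.ext_iff.1 hij (y j)).2 ⟨1, zero_le_one, (one_smul ℝ _).symm⟩
    exact hy.ne_smul hne c hc
  rw [hy.extremeRays_eq, Set.ncard_range_of_injective hinj, Nat.card_fin]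

theorem memP (hy : IsExposedFamily y) (hspan : Submodule.span ℝ (Set.range y) = ⊤) :
    MemP m (ConeGen y) :=
  ⟨⟨hy.isProperCone hspan, m, y, rfl⟩, hy.ncard_extremeRays⟩

end IsExposedFamily

section EdgeForm

variable {u v w : Fin 3 → ℝ}

/-- The linear form `x ↦ det ![u, v, x]`: its kernel contains `u` and `v`, and its sign tells on
which side of the plane spanned by `u` and `v` a vector lies. -/
def edgeForm (u v : Fin 3 → ℝ) : Module.Dual ℝ (Fin 3 → ℝ) :=
  dotProductEquiv ℝ (Fin 3) (u ⨯₃ v)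

theorem edgeForm_eq_dotProduct (u v w : Fin 3 → ℝ) : edgeForm u v w = w ⬝ᵥ u ⨯₃ v := by
  rw [edgeForm, dotProductEquiv_apply_apply, dotProduct_comm]

@[simp]
theorem edgeForm_apply_left (u v : Fin 3 → ℝ) : edgeForm u v u = 0 := by
  rw [edgeForm_eq_dotProduct, dot_self_cross]

@[simp]
theorem edgeForm_apply_right (u v : Fin 3 → ℝ) : edgeForm u v v = 0 := by
  rw [edgeForm_eq_dotProduct, dot_cross_self]

theorem edgeForm_rotate (u v w : Fin 3 → ℝ) : edgeForm u v w = edgeForm v w u := by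
  simp only [edgeForm_eq_dotProduct]
  exact triple_product_permutation w u v

theorem edgeForm_eq_det (u v w : Fin 3 → ℝ) : edgeForm u v w = det ![u, v, w] := by
  rw [edgeForm_rotate, edgeForm_eq_dotProduct, triple_product_eq_det]

theorem span_eq_top_of_edgeForm_ne_zero (h : edgeForm u v w ≠ 0) :
    Submodule.span ℝ (Set.range ![u, v, w]) = ⊤ := by
  rw [edgeForm_eq_det] at h
  have hindep : LinearIndependent ℝ ![u, v, w] :=
    Matrix.linearIndependent_rows_iff_isUnit.2 ((Matrix.isUnit_iff_isUnit_det _).2 h.isUnit)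
  exact hindep.span_eq_top_of_card_eq_finrank' (by simp)

end EdgeForm

theorem val_finRotate {m : ℕ} (i : Fin m) :
    (finRotate m i : ℕ) = if (i : ℕ) + 1 = m then 0 else (i : ℕ) + 1 := by
  obtain ⟨n, rfl⟩ := Nat.exists_eq_add_one.2 i.pos
  simp only [coe_finRotate, Fin.ext_iff, Fin.val_last, Nat.add_right_cancel_iff]

theorem finRotate_ne_self {m : ℕ} (hm : 2 ≤ m) (i : Fin m) : finRotate m i ≠ i := by
  rw [Ne, Fin.ext_iff, val_finRotate]
  split_ifs <;> omega

theorem finRotate_finRotate_ne_self {m : ℕ} (hm : 3 ≤ m) (i : Fin m) :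
    finRotate m (finRotate m i) ≠ i := by
  have hi := val_finRotate i
  have hi' := val_finRotate (finRotate m i)
  rw [Ne, Fin.ext_iff]
  split_ifs at hi hi' <;> omega

/-- The vectors `y 0, …, y (m - 1)` are, in this cyclic order, the vertices of a strictly convex,
positively oriented polygon in a projective sense: every vertex lies strictly on the positive
side of every edge plane not containing it. -/
def IsConvexPolygon {m : ℕ} (y : Fin m → Fin 3 → ℝ) : Prop :=
  ∀ i k, k ≠ i → k ≠ finRotate m i → 0 < edgeForm (y i) (y (finRotate m i)) (y k)

namespace IsConvexPolygon

variable {m : ℕ} {y : Fin m → Fin 3 → ℝ}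

theorem edgeForm_nonneg (hy : IsConvexPolygon y) (i k : Fin m) :
    0 ≤ edgeForm (y i) (y (finRotate m i)) (y k) := by
  rcases eq_or_ne k i with rfl | hi
  · simp
  rcases eq_or_ne k (finRotate m i) with rfl | hi'
  · simp
  exact (hy i k hi hi').le

theorem edgeForm_next_pos (hy : IsConvexPolygon y) (hm : 3 ≤ m) (i : Fin m) :
    0 < edgeForm (y i) (y (finRotate m i)) (y (finRotate m (finRotate m i))) :=
  hy _ _ (finRotate_finRotate_ne_self hm i) (finRotate_ne_self (by omega) _)

-- The sum of the forms of the two edges meeting at a vertex vanishes only at that vertex.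
theorem isExposedFamily (hy : IsConvexPolygon y) (hm : 3 ≤ m) : IsExposedFamily y := by
  intro i
  obtain ⟨j, rfl⟩ := (finRotate m).surjective i
  refine ⟨edgeForm (y j) (y (finRotate m j)) +
    edgeForm (y (finRotate m j)) (y (finRotate m (finRotate m j))), by simp, fun k hk => ?_⟩
  rw [LinearMap.add_apply]
  rcases eq_or_ne k j with rfl | hkj
  · rw [edgeForm_apply_left, zero_add]
    exact hy _ _ hk (finRotate_finRotate_ne_self hm k).symm
  · exact add_pos_of_pos_of_nonneg (hy j k hkj hk) (hy.edgeForm_nonneg _ k)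

theorem edgeForm_pos_of_mem_interior (hy : IsConvexPolygon y) (hm : 3 ≤ m) (i : Fin m)
    {x : Fin 3 → ℝ} (hx : x ∈ interior (ConeGen y)) :
    0 < edgeForm (y i) (y (finRotate m i)) x :=
  dual_pos_of_mem_interior (fun _ hz => dual_nonneg_of_mem_coneGen (hy.edgeForm_nonneg i) hz)
    (DFunLike.ne_iff.2 ⟨_, (hy.edgeForm_next_pos hm i).ne'⟩) hx

theorem span_range_eq_top (hy : IsConvexPolygon y) (hm : 3 ≤ m) :
    Submodule.span ℝ (Set.range y) = ⊤ := by
  have hspan := span_eq_top_of_edgeForm_ne_zero (hy.edgeForm_next_pos hm ⟨0, by omega⟩).ne'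
  refine top_unique (hspan.ge.trans (Submodule.span_mono ?_))
  simp [Matrix.range_cons, Set.insert_subset_iff]

end IsConvexPolygon

/-- The sequence `y` is an orbit of `A` whose first `m` points are the vertices of a convex
polygon and whose next point `y m` lies strictly between `y 0` and `y 1`. -/
structure IsPolygonalOrbit (A : Matrix (Fin 3) (Fin 3) ℝ) (m : ℕ) (y : ℕ → Fin 3 → ℝ) :
    Prop where
  three_le : 3 ≤ m
  mulVec_apply : ∀ k, A *ᵥ y k = y (k + 1)
  closing : ∃ a b : ℝ, 0 < a ∧ 0 < b ∧ y m = a • y 0 + b • y 1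
  polygon : IsConvexPolygon fun j : Fin m => y j

namespace IsPolygonalOrbit

variable {A : Matrix (Fin 3) (Fin 3) ℝ} {m : ℕ} {y : ℕ → Fin 3 → ℝ}

theorem isExposedFamily (h : IsPolygonalOrbit A m y) : IsExposedFamily fun j : Fin m => y j :=
  h.polygon.isExposedFamily h.three_le

theorem span_range_eq_top (h : IsPolygonalOrbit A m y) :
    Submodule.span ℝ (Set.range fun j : Fin m => y j) = ⊤ :=
  h.polygon.span_range_eq_top h.three_le

theorem nontrivial (h : IsPolygonalOrbit A m y) : Nontrivial (Fin m) :=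
  Fin.nontrivial_iff_two_le.2 (by have := h.three_le; omega)

theorem pow_mulVec_apply (h : IsPolygonalOrbit A m y) (k n : ℕ) : A ^ k *ᵥ y n = y (n + k) := by
  induction k with
  | zero => rw [pow_zero, one_mulVec, add_zero]
  | succ k ih => rw [pow_succ', ← mulVec_mulVec, ih, h.mulVec_apply, add_assoc]

theorem exists_apply_add_eq (h : IsPolygonalOrbit A m y) :
    ∃ a b : ℝ, 0 < a ∧ 0 < b ∧ ∀ n, y (n + m) = a • y n + b • y (n + 1) := by
  obtain ⟨a, b, ha, hb, hm⟩ := h.closing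
  refine ⟨a, b, ha, hb, fun n => ?_⟩
  have hshift := congrArg (A ^ n *ᵥ ·) hm
  simp only [mulVec_add, mulVec_smul, h.pow_mulVec_apply, zero_add] at hshift
  rwa [add_comm n m, add_comm n 1]

theorem kNonneg (h : IsPolygonalOrbit A m y) : KNonneg (ConeGen fun j : Fin m => y j) A := by
  refine kNonneg_coneGen_iff.2 fun j => ?_
  rw [h.mulVec_apply]
  rcases Nat.lt_or_eq_of_le (Nat.succ_le_of_lt j.isLt) with hlt | heq
  · exact apply_mem_coneGen hlt
  · obtain ⟨a, b, ha, hb, hm⟩ := h.closing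
    have hthree := h.three_le
    rw [show (j : ℕ) + 1 = m from heq, hm]
    exact add_mem_coneGen (smul_mem_coneGen ha.le (apply_mem_coneGen (by omega)))
      (smul_mem_coneGen hb.le (apply_mem_coneGen (by omega)))

theorem surjective_mulVec (h : IsPolygonalOrbit A m y) : Function.Surjective A.mulVec := by
  obtain ⟨a, b, ha, -, hm⟩ := h.closing
  have hthree := h.three_le
  let R := LinearMap.range A.mulVecLin
  have hsucc (k : ℕ) : y (k + 1) ∈ R := ⟨y k, h.mulVec_apply k⟩
  have hzero : y 0 ∈ R := by
    rw [← Submodule.smul_mem_iff R ha.ne', eq_sub_of_add_eq hm.symm, show m = m - 1 + 1 by omega]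
    exact R.sub_mem (hsucc _) (R.smul_mem b (hsucc 0))
  have hrange (k : ℕ) : y k ∈ R := by
    cases k with
    | zero => exact hzero
    | succ k => exact hsucc k
  have hR : R = ⊤ := top_unique <| h.span_range_eq_top.ge.trans <|
    Submodule.span_le.2 <| Set.range_subset_iff.2 fun j => hrange j
  exact LinearMap.range_eq_top.1 hR

theorem exists_edgeForm_eq_zero (h : IsPolygonalOrbit A m y) {k : ℕ} (hk : k < 2 * m - 1) :
    ∃ i : Fin m, edgeForm (y i) (y (finRotate m i)) (y k) = 0 := by
  rcases lt_or_ge k m with hlt | hge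
  · exact ⟨⟨k, hlt⟩, edgeForm_apply_left _ _⟩
  obtain ⟨n, rfl⟩ := Nat.exists_eq_add_of_le' hge
  obtain ⟨a, b, -, -, hadd⟩ := h.exists_apply_add_eq
  have hnext : (finRotate m ⟨n, by omega⟩ : ℕ) = n + 1 := by
    rw [val_finRotate, if_neg (by dsimp only; omega)]
  refine ⟨⟨n, by omega⟩, ?_⟩
  rw [hnext, hadd, map_add, map_smul, map_smul, edgeForm_apply_left, edgeForm_apply_right,
    smul_zero, smul_zero, add_zero]

-- Closing up twice, `y (2 * m - 1)` is a positive combination of `y (m - 1)`, `y 0` and `y 1`.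
theorem apply_two_mul_sub_one_mem_interior (h : IsPolygonalOrbit A m y) :
    y (2 * m - 1) ∈ interior (ConeGen fun j : Fin m => y j) := by
  obtain ⟨a, b, ha, hb, hadd⟩ := h.exists_apply_add_eq
  obtain ⟨n, rfl⟩ := Nat.exists_eq_add_of_le' h.three_le
  have hpos := h.polygon (Fin.last (n + 2)) 1 (by simp [Fin.ext_iff]) (by simp)
  have hlast : y (2 * (n + 3) - 1) =
      ∑ i, ![a, b * a, b * b] i • ![y (n + 2), y 0, y 1] i := by
    have hn : y (n + 3) = a • y 0 + b • y 1 := by simpa using hadd 0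
    rw [show 2 * (n + 3) - 1 = n + 2 + (n + 3) by omega, hadd, hn]
    simp only [Fin.sum_univ_three, cons_val, smul_add, smul_smul, add_assoc]
  rw [hlast, coneGen_eq_hull]
  refine sum_smul_mem_interior_pointedCone (fun i => ?_)
    (span_eq_top_of_edgeForm_ne_zero ?_) fun i => ?_
  · rw [← SetLike.mem_coe, ← coneGen_eq_hull]
    fin_cases i <;> exact apply_mem_coneGen (by omega)
  · simpa using hpos.ne'
  · fin_cases i <;> simp [ha, hb]

theorem apply_mem_interior_iff (h : IsPolygonalOrbit A m y) {k : ℕ} :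
    y k ∈ interior (ConeGen fun j : Fin m => y j) ↔ 2 * m - 1 ≤ k := by
  refine ⟨fun hmem => not_lt.1 fun hk => ?_, fun hk => ?_⟩
  · obtain ⟨i, hi⟩ := h.exists_edgeForm_eq_zero hk
    exact (h.polygon.edgeForm_pos_of_mem_interior h.three_le i hmem).ne' hi
  induction k, hk using Nat.le_induction with
  | base => exact h.apply_two_mul_sub_one_mem_interior
  | succ k _ ih =>
    rw [← h.mulVec_apply]
    exact h.kNonneg.mapsTo_interior h.surjective_mulVec ih

theorem kPositive_pow_iff (h : IsPolygonalOrbit A m y) {k : ℕ} :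
    KPositive (ConeGen fun j : Fin m => y j) (A ^ k) ↔ 2 * m - 1 ≤ k := by
  have := h.nontrivial
  rw [kPositive_coneGen_iff h.isExposedFamily.ne_zero]
  simp only [h.pow_mulVec_apply, h.apply_mem_interior_iff]
  have hm := h.three_le
  exact ⟨fun hk => by simpa using hk ⟨0, by omega⟩, fun hk j => by omega⟩

theorem kPrimitive (h : IsPolygonalOrbit A m y) : KPrimitive (ConeGen fun j : Fin m => y j) A :=
  ⟨h.kNonneg, 2 * m - 1, by have := h.three_le; omega, h.kPositive_pow_iff.2 le_rfl⟩

theorem expnt_eq (h : IsPolygonalOrbit A m y) :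
    expnt (ConeGen fun j : Fin m => y j) A = 2 * m - 1 := by
  have hm := h.three_le
  have hset : {k : ℕ | 0 < k ∧ KPositive (ConeGen fun j : Fin m => y j) (A ^ k)} =
      Set.Ici (2 * m - 1) := by
    ext k
    rw [Set.mem_ofPred_eq, h.kPositive_pow_iff, Set.mem_Ici]
    omega
  rw [expnt, hset, csInf_Ici]

end IsPolygonalOrbit

section Xvec

variable {r θ : ℝ}

theorem atheta_mulVec_xvec (r θ : ℝ) (k : ℕ) : Atheta r θ *ᵥ xvec r θ k = xvec r θ (k + 1) := by
  simp only [Atheta, xvec, cons_mulVec, empty_mulVec, vec3_dotProduct, cons_val, Nat.cast_succ,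
    add_mul, one_mul, sin_add, cos_add]
  exact vec3_eq (by ring) (by ring) (by ring)

theorem edgeForm_xvec (r θ : ℝ) (i j k : ℕ) :
    edgeForm (xvec r θ i) (xvec r θ j) (xvec r θ k) =
      r ^ (j + k) * sin ((k - j) * θ) - r ^ (i + k) * sin ((k - i) * θ)
        + r ^ (i + j) * sin ((j - i) * θ) := by
  simp only [edgeForm_eq_dotProduct, cross_apply, vec3_dotProduct, xvec, cons_val, sub_mul, sin_sub]
  ring

theorem edgeForm_xvec_add (r θ : ℝ) (i j k n : ℕ) :
    edgeForm (xvec r θ (i + n)) (xvec r θ (j + n)) (xvec r θ (k + n)) =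
      r ^ (2 * n) * edgeForm (xvec r θ i) (xvec r θ j) (xvec r θ k) := by
  simp only [edgeForm_xvec, Nat.cast_add, add_sub_add_right_eq_sub]
  ring

theorem edgeForm_xvec_reverse (hr : r ≠ 0) {i j k i' j' k' n : ℕ} (hi : i + i' = n)
    (hj : j + j' = n) (hk : k + k' = n) :
    edgeForm (xvec r θ i) (xvec r θ j) (xvec r θ k) =
      r ^ (2 * n) * edgeForm (xvec r⁻¹ θ k') (xvec r⁻¹ θ j') (xvec r⁻¹ θ i') := by
  have hpow {p q p' q' : ℕ} (hp : p + p' = n) (hq : q + q' = n) :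
      r ^ (p + q) = r ^ (2 * n) * r⁻¹ ^ (q' + p') := by
    rw [show 2 * n = p + q + (q' + p') by omega, pow_add _ (p + q), inv_pow,
      mul_inv_cancel_right₀ (pow_ne_zero _ hr)]
  have hdiff {p q p' q' : ℕ} (hp : p + p' = n) (hq : q + q' = n) : (q - p : ℝ) = p' - q' := by
    rw [sub_eq_sub_iff_add_eq_add]
    exact_mod_cast by omega
  rw [edgeForm_xvec, edgeForm_xvec, hpow hj hk, hpow hi hk, hpow hi hj, hdiff hj hk, hdiff hi hk,
    hdiff hi hj]
  ring

theorem edgeForm_xvec_zero_one (r θ : ℝ) (k : ℕ) :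
    edgeForm (xvec r θ 0) (xvec r θ 1) (xvec r θ k) =
      ((r - cos θ) ^ 2 + sin θ ^ 2) * ∑ q ∈ Finset.range k, r ^ q * sin (q * θ) := by
  induction k with
  | zero => rw [Finset.sum_range_zero, mul_zero, edgeForm_apply_left]
  | succ k ih =>
    rw [Finset.sum_range_succ, mul_add, ← ih, edgeForm_xvec, edgeForm_xvec, sin_sq]
    push_cast
    rw [add_sub_cancel_right]
    simp only [sub_mul, add_mul, sin_sub, sin_add, one_mul, zero_mul, sin_zero, cos_zero]
    ring

-- The summands change sign once, so the partial sums first increase, then decrease to the last.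
theorem sum_pow_mul_sin_pos {N k : ℕ} (hr : 0 < r) (hθ : 0 < θ) (hN : (N - 1) * θ < 2 * π)
    (hsum : 0 ≤ ∑ q ∈ Finset.range N, r ^ q * sin (q * θ)) (hk : 2 ≤ k) (hkN : k < N) :
    0 < ∑ q ∈ Finset.range k, r ^ q * sin (q * θ) := by
  rcases le_or_gt (k * θ) π with hle | hgt
  · have hsin {q : ℕ} (hq : q < k) : 0 ≤ sin (q * θ) :=
      sin_nonneg_of_nonneg_of_le_pi (by positivity) (le_trans (by gcongr) hle)
    have hθπ : θ < π := by
      have : (2 : ℝ) ≤ k := by exact_mod_cast hk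
      nlinarith
    refine Finset.sum_pos' (fun q hq => mul_nonneg (by positivity) (hsin (Finset.mem_range.1 hq)))
      ⟨1, Finset.mem_range.2 (by omega), ?_⟩
    simpa using mul_pos hr (sin_pos_of_pos_of_lt_pi hθ hθπ)
  · have hneg : ∀ q ∈ Finset.Ico k N, r ^ q * sin (q * θ) < 0 := by
      intro q hq
      obtain ⟨hkq, hqN⟩ := Finset.mem_Ico.1 hq
      have hlow : π < q * θ := hgt.trans_le (by gcongr)
      have hqN' : (q : ℝ) ≤ N - 1 := by
        rw [le_sub_iff_add_le]
        exact_mod_cast hqN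
      have hhigh : q * θ < 2 * π := lt_of_le_of_lt (by gcongr) hN
      refine mul_neg_of_pos_of_neg (by positivity) ?_
      rw [← sin_sub_two_pi]
      exact sin_neg_of_neg_of_neg_pi_lt (by linarith) (by linarith)
    have htail := Finset.sum_neg hneg (Finset.nonempty_Ico.2 hkN)
    have hsplit := Finset.sum_range_add_sum_Ico (fun q : ℕ => r ^ q * sin (q * θ)) hkN.le
    linarith

theorem edgeForm_xvec_zero_one_pos {N k : ℕ} (hr : 0 < r) (hθ : 0 < θ) (hθπ : θ < π)
    (hN : (N - 1) * θ < 2 * π)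
    (hlast : 0 ≤ edgeForm (xvec r θ 0) (xvec r θ 1) (xvec r θ N)) (hk : 2 ≤ k) (hkN : k < N) :
    0 < edgeForm (xvec r θ 0) (xvec r θ 1) (xvec r θ k) := by
  have hsin := sin_pos_of_pos_of_lt_pi hθ hθπ
  have hcoeff : 0 < (r - cos θ) ^ 2 + sin θ ^ 2 := by positivity
  rw [edgeForm_xvec_zero_one] at hlast ⊢
  exact mul_pos hcoeff
    (sum_pow_mul_sin_pos hr hθ hN (nonneg_of_mul_nonneg_right hlast hcoeff) hk hkN)

-- The third coordinate is where `g_θ` comes from: `x_{n+1}` lies in the plane of `x_0` and `x_1`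
-- exactly when `r` is a root.
theorem xvec_succ_eq (hsin : sin θ ≠ 0) (n : ℕ) :
    xvec r θ (n + 1) = (-(r ^ (n + 1) * sin (n * θ)) / sin θ) • xvec r θ 0
      + (r ^ n * sin ((n + 1 : ℕ) * θ) / sin θ) • xvec r θ 1 + gpoly (n + 1) θ r • ![0, 0, 1] := by
  simp only [xvec, gpoly, smul_vec3, vec3_add, smul_eq_mul, Nat.cast_succ, Nat.cast_zero, zero_add,
    zero_mul, one_mul, sin_zero, cos_zero, add_sub_cancel_right, Nat.add_sub_cancel]
  refine vec3_eq ?_ ?_ (by ring)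
  · simp only [add_mul, one_mul, sin_add, cos_add]
    field_simp
    linear_combination -r ^ (n + 1) * sin (n * θ) * sin_sq_add_cos_sq θ
  · field_simp
    ring

theorem bounds_of_mem_Ioo_two_pi_div {m : ℕ} (hm : 3 ≤ m)
    (hθ : θ ∈ Set.Ioo (2 * π / (m : ℝ)) (2 * π / ((m : ℝ) - 1))) :
    0 < θ ∧ θ < π ∧ 2 * π < m * θ ∧ (m - 1) * θ < 2 * π := by
  have hm' : (3 : ℝ) ≤ m := by exact_mod_cast hm
  obtain ⟨hlow, hhigh⟩ := hθ
  rw [div_lt_iff₀' (by linarith)] at hlow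
  rw [lt_div_iff₀' (by linarith)] at hhigh
  have hpos : 0 < θ := pos_of_mul_pos_right (two_pi_pos.trans hlow) (by linarith)
  exact ⟨hpos, by nlinarith, hlow, hhigh⟩

section Closing

variable {m : ℕ} {a b : ℝ}

theorem exists_xvec_eq_of_gpoly_eq_zero (hr : 0 < r) (hθ : 0 < θ) (hθπ : θ < π)
    (hlow : 2 * π < (m + 1) * θ) (hhigh : m * θ < 2 * π) (hroot : gpoly (m + 1) θ r = 0) :
    ∃ a b : ℝ, 0 < a ∧ 0 < b ∧ xvec r θ (m + 1) = a • xvec r θ 0 + b • xvec r θ 1 := by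
  have hsin := sin_pos_of_pos_of_lt_pi hθ hθπ
  have hsin_last : sin (m * θ) < 0 := by
    rw [← sin_sub_two_pi]
    exact sin_neg_of_neg_of_neg_pi_lt (by linarith) (by linarith)
  have hsin_next : 0 < sin ((m + 1 : ℕ) * θ) := by
    rw [← sin_sub_two_pi, Nat.cast_succ]
    exact sin_pos_of_pos_of_lt_pi (by linarith) (by linarith)
  have hcoeff : 0 < -(r ^ (m + 1) * sin (m * θ)) :=
    neg_pos.2 (mul_neg_of_pos_of_neg (by positivity) hsin_last)
  refine ⟨_, _, div_pos hcoeff hsin, div_pos (mul_pos (pow_pos hr m) hsin_next) hsin, ?_⟩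
  rw [xvec_succ_eq hsin.ne', hroot, zero_smul, add_zero]

theorem edgeForm_xvec_last_zero (hclose : xvec r θ (m + 1) = a • xvec r θ 0 + b • xvec r θ 1)
    (k : ℕ) :
    r ^ 2 * edgeForm (xvec r θ m) (xvec r θ 0) (xvec r θ k) =
      a * edgeForm (xvec r θ 0) (xvec r θ 1) (xvec r θ (k + 1)) := by
  have hshift := edgeForm_xvec_add r θ m 0 k 1
  rw [mul_one, zero_add] at hshift
  rw [← hshift, edgeForm_rotate, hclose, map_add, map_smul, map_smul, edgeForm_apply_left,
    smul_zero, add_zero, smul_eq_mul, edgeForm_rotate (xvec r θ 0)]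

theorem edgeForm_xvec_zero_one_pos_of_closing (hr : 0 < r) (hθ : 0 < θ) (hθπ : θ < π)
    (hhigh : m * θ < 2 * π) (hclose : xvec r θ (m + 1) = a • xvec r θ 0 + b • xvec r θ 1)
    {k : ℕ} (hk : 2 ≤ k) (hkm : k ≤ m) :
    0 < edgeForm (xvec r θ 0) (xvec r θ 1) (xvec r θ k) := by
  refine edgeForm_xvec_zero_one_pos (N := m + 1) hr hθ hθπ ?_ ?_ hk (by omega)
  · rwa [Nat.cast_succ, add_sub_cancel_right]
  · simp [hclose]

theorem edgeForm_xvec_last_zero_pos (hr : 0 < r) (hθ : 0 < θ) (hθπ : θ < π)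
    (hhigh : m * θ < 2 * π) (ha : 0 < a)
    (hclose : xvec r θ (m + 1) = a • xvec r θ 0 + b • xvec r θ 1)
    {k : ℕ} (hk : 0 < k) (hkm : k < m) :
    0 < edgeForm (xvec r θ m) (xvec r θ 0) (xvec r θ k) := by
  have hfirst := edgeForm_xvec_zero_one_pos_of_closing hr hθ hθπ hhigh hclose
    (k := k + 1) (by omega) (by omega)
  have hlast := edgeForm_xvec_last_zero hclose k
  exact pos_of_mul_pos_right (hlast ▸ mul_pos ha hfirst) (by positivity)

theorem edgeForm_xvec_inv_zero_one_pos (hr : 0 < r) (hθ : 0 < θ) (hθπ : θ < π)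
    (hhigh : m * θ < 2 * π) (ha : 0 < a)
    (hclose : xvec r θ (m + 1) = a • xvec r θ 0 + b • xvec r θ 1)
    {k : ℕ} (hk : 2 ≤ k) (hkm : k ≤ m) :
    0 < edgeForm (xvec r⁻¹ θ 0) (xvec r⁻¹ θ 1) (xvec r⁻¹ θ k) := by
  have hlast : 0 < edgeForm (xvec r⁻¹ θ 0) (xvec r⁻¹ θ 1) (xvec r⁻¹ θ m) := by
    have hpos := edgeForm_xvec_last_zero_pos hr hθ hθπ hhigh ha hclose
      (k := m - 1) (by omega) (by omega)
    rw [edgeForm_rotate, edgeForm_xvec_reverse (i' := m) (j' := 1) (k' := 0) hr.ne' (zero_add m)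
      (by omega) (add_zero m)] at hpos
    exact pos_of_mul_pos_right hpos (by positivity)
  rcases hkm.eq_or_lt with rfl | hlt
  · exact hlast
  · exact edgeForm_xvec_zero_one_pos (inv_pos.2 hr) hθ hθπ (by linarith) hlast.le hk hlt

theorem isConvexPolygon_xvec (hr : 0 < r) (hθ : 0 < θ) (hθπ : θ < π)
    (hhigh : m * θ < 2 * π) (ha : 0 < a)
    (hclose : xvec r θ (m + 1) = a • xvec r θ 0 + b • xvec r θ 1) :
    IsConvexPolygon fun j : Fin (m + 1) => xvec r θ j := by
  intro i k hki hknext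
  simp only [Ne, Fin.ext_iff] at hki hknext ⊢
  rw [val_finRotate] at hknext ⊢
  have hi := i.isLt
  have hk := k.isLt
  split_ifs at hknext ⊢ with hlast
  · rw [show (i : ℕ) = m by omega]
    exact edgeForm_xvec_last_zero_pos hr hθ hθπ hhigh ha hclose (by omega) (by omega)
  rcases lt_or_gt_of_ne hki with hlt | hgt
  · rw [edgeForm_xvec_reverse (i' := 1) (j' := 0) (k' := i + 1 - k) (n := i + 1) hr.ne' rfl
      (add_zero _) (by omega), edgeForm_rotate]
    exact mul_pos (by positivity) (edgeForm_xvec_inv_zero_one_pos hr hθ hθπ hhigh ha hclose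
      (by omega) (by omega))
  · have hshift := edgeForm_xvec_add r θ 0 1 (k - i) i
    rw [zero_add, add_comm 1, Nat.sub_add_cancel hgt.le] at hshift
    rw [hshift]
    exact mul_pos (by positivity) (edgeForm_xvec_zero_one_pos_of_closing hr hθ hθπ hhigh hclose
      (by omega) (by omega))

theorem isPolygonalOrbit_xvec (hm : 3 ≤ m) (hr : 0 < r) (hθ : 0 < θ) (hθπ : θ < π)
    (hlow : 2 * π < m * θ) (hhigh : (m - 1) * θ < 2 * π) (hroot : gpoly m θ r = 0) :
    IsPolygonalOrbit (Atheta r θ) m (xvec r θ) := by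
  obtain ⟨n, rfl⟩ := Nat.exists_eq_add_of_le' (show 1 ≤ m by omega)
  rw [Nat.cast_succ] at hlow hhigh
  rw [add_sub_cancel_right] at hhigh
  obtain ⟨a, b, ha, hb, hclose⟩ :=
    exists_xvec_eq_of_gpoly_eq_zero hr hθ hθπ hlow hhigh hroot
  exact ⟨hm, atheta_mulVec_xvec r θ, ⟨a, b, ha, hb, hclose⟩,
    isConvexPolygon_xvec hr hθ hθπ hhigh ha hclose⟩

end Closing

end Xvec

/-- For `m ≥ 3` and `θ ∈ (2π/m, 2π/(m-1))`, with `r = r_θ` the unique positive real root of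
`g_θ`: the vectors `x_1(θ), …, x_m(θ)` are pairwise non-proportional and are, up to positive
multiples, exactly the extreme vectors of `K_θ`; `K_θ ∈ P(m,3)`; `A_θ` is `K_θ`-nonnegative
and `K_θ`-primitive, and `γ(A_θ) = 2m - 1`. -/
theorem stmt_7 (m : ℕ) (hm : 3 ≤ m) (θ : ℝ)
    (hθ : θ ∈ Set.Ioo (2 * π / (m : ℝ)) (2 * π / ((m : ℝ) - 1)))
    (r : ℝ) (hr0 : 0 < r) (hroot : gpoly m θ r = 0)
    (huniq : ∀ s : ℝ, 0 < s → gpoly m θ s = 0 → s = r) :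
    (∀ i j : Fin m, i ≠ j → ∀ c : ℝ, xvec r θ j.val ≠ c • xvec r θ i.val) ∧
    (∀ x : Fin 3 → ℝ, IsExtremeVec (Ktheta m r θ) x ↔
      ∃ (j : Fin m) (c : ℝ), 0 < c ∧ x = c • xvec r θ j.val) ∧
    MemP m (Ktheta m r θ) ∧
    KNonneg (Ktheta m r θ) (Atheta r θ) ∧
    KPrimitive (Ktheta m r θ) (Atheta r θ) ∧
    expnt (Ktheta m r θ) (Atheta r θ) = 2 * m - 1 := by
  obtain ⟨hθ0, hθπ, hlow, hhigh⟩ := bounds_of_mem_Ioo_two_pi_div hm hθ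
  have horbit := isPolygonalOrbit_xvec hm hr0 hθ0 hθπ hlow hhigh hroot
  have hexp := horbit.isExposedFamily
  have := horbit.nontrivial
  exact ⟨fun i j hij c => hexp.ne_smul hij c, fun x => hexp.isExtremeVec_iff,
    hexp.memP horbit.span_range_eq_top, horbit.kNonneg, horbit.kPrimitive, horbit.expnt_eq⟩
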